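/- arXiv:2603.15360 — 3 statements merged into one kernel-verified Lean document; each statement's English description precedes it below -/
import Mathlib

section
/- Let Ω be a finite scenario set with probability weights p : Ω → ℝ satisfying p_ω ≥ 0 and Σ_ω p_ω = 1, let L : Ω → ℝ, and let α ∈ [0,1). Then the infimum of F_α over ℝ is attained: there exists θ* ∈ ℝ such that F_α(θ*) ≤ F_α(θ) for all θ ∈ ℝ; in particular CVaR_α(L) = inf_θ F_α(θ) is a (finite) minimum. -/
/-- The infimum of the Rockafellar–Uryasev function `F_α` over `ℝ`
is attained, so `CVaR_α(L) = inf_θ F_α(θ)` is a (finite) minimum. -/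
theorem rockafellar_uryasev_inf_attained
    (N : ℕ) (p : Fin N → ℝ) (L : Fin N → ℝ) (α : ℝ)
    (hp : ∀ ω, 0 ≤ p ω) (hpsum : ∑ ω, p ω = 1)
    (hα : 0 ≤ α ∧ α < 1) :
    ∃ θstar : ℝ,
      (∀ θ : ℝ,
        (θstar + (1 - α)⁻¹ * ∑ ω, p ω * max (L ω - θstar) 0) ≤
          (θ + (1 - α)⁻¹ * ∑ ω, p ω * max (L ω - θ) 0)) ∧
      sInf (Set.range fun θ : ℝ => θ + (1 - α)⁻¹ * ∑ ω, p ω * max (L ω - θ) 0) =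
        θstar + (1 - α)⁻¹ * ∑ ω, p ω * max (L ω - θstar) 0 := by
  obtain ⟨h0, h1⟩ := hα
  have hc : 1 ≤ (1 - α)⁻¹ := (one_le_inv₀ (by linarith)).2 (by linarith)
  generalize (1 - α)⁻¹ = c at hc ⊢
  obtain ⟨M, hM0, hM⟩ : ∃ M : ℝ, 0 ≤ M ∧ ∀ ω, |L ω| ≤ M :=
    ⟨∑ ω, |L ω|, Finset.sum_nonneg fun _ _ => abs_nonneg _, fun ω =>
      Finset.single_le_sum (f := fun ω => |L ω|) (fun _ _ => abs_nonneg _) (Finset.mem_univ ω)⟩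
  have hlow : ∀ θ, θ ≤ -M → ∑ ω, p ω * max (L ω - θ) 0 = ∑ ω, p ω * L ω - θ := by
    intro θ hθ
    have : ∀ ω, p ω * max (L ω - θ) 0 = p ω * L ω - p ω * θ := by
      intro ω
      have := (abs_le.1 (hM ω)).1
      rw [max_eq_left (by linarith)]; ring
    simp only [this]
    rw [Finset.sum_sub_distrib, ← Finset.sum_mul, hpsum, one_mul]
  have hhigh : ∀ θ, M ≤ θ → ∑ ω, p ω * max (L ω - θ) 0 = 0 := by
    intro θ hθ
    refine Finset.sum_eq_zero fun ω _ => ?_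
    have := (abs_le.1 (hM ω)).2
    rw [max_eq_right (by linarith), mul_zero]
  have hcont : Continuous fun θ : ℝ => θ + c * ∑ ω, p ω * max (L ω - θ) 0 := by fun_prop
  obtain ⟨t, -, ht⟩ := (isCompact_Icc (a := -M) (b := M)).exists_isMinOn
    ⟨0, by constructor <;> linarith⟩ hcont.continuousOn
  have ht' : ∀ θ ∈ Set.Icc (-M) M, t + c * ∑ ω, p ω * max (L ω - t) 0 ≤
      θ + c * ∑ ω, p ω * max (L ω - θ) 0 := fun θ hθ => ht hθ
  have key : ∀ θ : ℝ, t + c * ∑ ω, p ω * max (L ω - t) 0 ≤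
      θ + c * ∑ ω, p ω * max (L ω - θ) 0 := by
    intro θ
    rcases le_total θ (-M) with h | h
    · refine (ht' (-M) ⟨le_rfl, by linarith⟩).trans ?_
      rw [hlow _ le_rfl, hlow _ h]
      nlinarith
    rcases le_total M θ with h' | h'
    · refine (ht' M ⟨by linarith, le_rfl⟩).trans ?_
      rw [hhigh _ le_rfl, hhigh _ h']
      linarith
    · exact ht' θ ⟨h, h'⟩
  refine ⟨t, key, IsLeast.csInf_eq ⟨⟨t, rfl⟩, ?_⟩⟩
  rintro _ ⟨θ, rfl⟩
  exact key θ
end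

section
/- Let Ω be a finite scenario set with probability weights p : Ω → ℝ satisfying p_ω ≥ 0 and Σ_ω p_ω = 1, let L : Ω → ℝ, and let α ∈ (0,1). Define the value-at-risk VaR_α(L) = inf { l ∈ ℝ : Σ_{ω : L_ω ≤ l} p_ω ≥ α }. Then VaR_α(L) is a minimizer of the Rockafellar–Uryasev function, i.e. F_α(VaR_α(L)) = inf_{θ ∈ ℝ} F_α(θ) = CVaR_α(L). -/
theorem aux_mem (N : ℕ) (p : Fin N → ℝ) (L : Fin N → ℝ) (α : ℝ)
    (hp : ∀ ω, 0 ≤ p ω) (hα : 0 < α) (T : Finset (Fin N)) (hT : α ≤ ∑ ω ∈ T, p ω) :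
    ∃ ω ∈ T, α ≤ ∑ i ∈ Finset.univ.filter (fun i => L i ≤ L ω), p i := by
  have hne : T.Nonempty := by
    rw [Finset.nonempty_iff_ne_empty]
    rintro rfl
    simp at hT
    linarith
  obtain ⟨ω, hω, hmax⟩ := T.exists_max_image L hne
  refine ⟨ω, hω, hT.trans ?_⟩
  apply Finset.sum_le_sum_of_subset_of_nonneg
  · intro i hi
    simpa using hmax i hi
  · intro i _ _
    exact hp i

open Finset in
/-- `VaR_α(L) = inf { l : Σ_{ω : L_ω ≤ l} p_ω ≥ α }` is a minimizer of the
Rockafellar–Uryasev function: `F_α(VaR_α(L)) = inf_θ F_α(θ) = CVaR_α(L)`. -/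
theorem var_minimizes_rockafellar_uryasev
    (N : ℕ) (p : Fin N → ℝ) (L : Fin N → ℝ) (α : ℝ)
    (hp : ∀ ω, 0 ≤ p ω) (hpsum : ∑ ω, p ω = 1)
    (hα : 0 < α ∧ α < 1) :
    (sInf {l : ℝ | α ≤ ∑ ω ∈ Finset.univ.filter (fun ω => L ω ≤ l), p ω}) +
        (1 - α)⁻¹ *
          ∑ ω, p ω *
            max (L ω - sInf {l : ℝ | α ≤ ∑ ω ∈ Finset.univ.filter (fun ω => L ω ≤ l), p ω}) 0 =
      sInf (Set.range fun θ : ℝ => θ + (1 - α)⁻¹ * ∑ ω, p ω * max (L ω - θ) 0) := by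
  obtain ⟨h0, h1⟩ := hα
  set S : Set ℝ := {l : ℝ | α ≤ ∑ ω ∈ Finset.univ.filter (fun ω => L ω ≤ l), p ω} with hS
  obtain ⟨w, -, hw⟩ := aux_mem N p L α hp h0 Finset.univ (by rw [hpsum]; exact h1.le)
  obtain ⟨m, hm, hmin⟩ := (Finset.univ.filter (fun ω => L ω ∈ S)).exists_min_image L
    ⟨w, by simpa [hS] using hw⟩
  have hleast : IsLeast S (L m) := by
    refine ⟨(Finset.mem_filter.1 hm).2, fun l hl => ?_⟩
    obtain ⟨i, hi, hi'⟩ := aux_mem N p L α hp h0 _ hl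
    have := hmin i (Finset.mem_filter.2 ⟨Finset.mem_univ _, hi'⟩)
    exact this.trans (Finset.mem_filter.1 hi).2
  have hv : sInf S = L m := hleast.csInf_eq
  rw [hv]
  generalize L m = v at hleast
  have hA : α ≤ ∑ ω, p ω * (if L ω ≤ v then 1 else 0) := by
    have := hleast.1
    simp only [hS, Set.mem_setOf_eq, Finset.sum_filter] at this
    simpa using this
  have hB : ∑ ω, p ω * (if L ω < v then 1 else 0) ≤ α := by
    by_contra! hc
    obtain ⟨i, hi, hi'⟩ := aux_mem N p L α hp h0 (Finset.univ.filter (fun ω => L ω < v))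
      (by rw [Finset.sum_filter]; simpa using hc.le)
    have h2 : v ≤ L i := hleast.2 hi'
    have h3 := (Finset.mem_filter.1 hi).2
    linarith
  have hc : 0 < 1 - α := by linarith
  have key : ∀ θ : ℝ, v + (1 - α)⁻¹ * ∑ ω, p ω * max (L ω - v) 0 ≤
      θ + (1 - α)⁻¹ * ∑ ω, p ω * max (L ω - θ) 0 := by
    intro θ
    have main : (1 - α) * (v - θ) + ∑ ω, p ω * max (L ω - v) 0 ≤
        ∑ ω, p ω * max (L ω - θ) 0 := by
      rcases le_total v θ with h | h
      · have : ∑ ω, p ω * max (L ω - v) 0 +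
            (v - θ) * (∑ ω, p ω - ∑ ω, p ω * (if L ω ≤ v then 1 else 0)) ≤
            ∑ ω, p ω * max (L ω - θ) 0 := by
          rw [← Finset.sum_sub_distrib, Finset.mul_sum, ← Finset.sum_add_distrib]
          refine Finset.sum_le_sum fun i _ => ?_
          have : max (L i - v) 0 + (v - θ) * (1 - if L i ≤ v then 1 else 0) ≤
              max (L i - θ) 0 := by
            have a := le_max_left (L i - θ) 0
            have b := le_max_right (L i - θ) 0
            split_ifs with hi
            · rw [max_eq_right (by linarith : L i - v ≤ 0)]; linarith
            · rw [max_eq_left (by linarith : 0 ≤ L i - v)]; linarith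
          have := mul_le_mul_of_nonneg_left this (hp i)
          linarith
        rw [hpsum] at this
        nlinarith
      · have : ∑ ω, p ω * max (L ω - v) 0 +
            (v - θ) * (∑ ω, p ω - ∑ ω, p ω * (if L ω < v then 1 else 0)) ≤
            ∑ ω, p ω * max (L ω - θ) 0 := by
          rw [← Finset.sum_sub_distrib, Finset.mul_sum, ← Finset.sum_add_distrib]
          refine Finset.sum_le_sum fun i _ => ?_
          have : max (L i - v) 0 + (v - θ) * (1 - if L i < v then 1 else 0) ≤
              max (L i - θ) 0 := by
            have a := le_max_left (L i - θ) 0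
            have b := le_max_right (L i - θ) 0
            split_ifs with hi
            · rw [max_eq_right (by linarith : L i - v ≤ 0)]; linarith
            · rw [max_eq_left (by linarith : 0 ≤ L i - v)]; linarith
          have := mul_le_mul_of_nonneg_left this (hp i)
          linarith
        rw [hpsum] at this
        nlinarith
    have h4 := mul_le_mul_of_nonneg_left main (inv_nonneg.2 hc.le)
    rw [mul_add, inv_mul_cancel_left₀ hc.ne'] at h4
    linarith
  have hl : IsLeast (Set.range fun θ : ℝ => θ + (1 - α)⁻¹ * ∑ ω, p ω * max (L ω - θ) 0)
      (v + (1 - α)⁻¹ * ∑ ω, p ω * max (L ω - v) 0) := by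
    refine ⟨⟨v, rfl⟩, ?_⟩
    rintro _ ⟨θ, rfl⟩
    exact key θ
  exact hl.csInf_eq.symm
end

section
/- Let Ω be a finite scenario set with probability weights p : Ω → ℝ satisfying p_ω ≥ 0 and Σ_ω p_ω = 1, let L¹, L² : Ω → ℝ, and let α ∈ [0,1). Then CVaR is subadditive: CVaR_α(L¹ + L²) ≤ CVaR_α(L¹) + CVaR_α(L²), where (L¹ + L²)_ω = L¹_ω + L²_ω. -/
/-- Subadditivity of CVaR:
`CVaR_α(L¹ + L²) ≤ CVaR_α(L¹) + CVaR_α(L²)`. -/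
theorem cvar_subadditive
    (N : ℕ) (p : Fin N → ℝ) (L₁ L₂ : Fin N → ℝ) (α : ℝ)
    (hp : ∀ ω, 0 ≤ p ω) (hpsum : ∑ ω, p ω = 1)
    (hα : 0 ≤ α ∧ α < 1) :
    sInf (Set.range fun θ : ℝ =>
        θ + (1 - α)⁻¹ * ∑ ω, p ω * max ((L₁ ω + L₂ ω) - θ) 0) ≤
      sInf (Set.range fun θ : ℝ =>
          θ + (1 - α)⁻¹ * ∑ ω, p ω * max (L₁ ω - θ) 0) +
        sInf (Set.range fun θ : ℝ =>
          θ + (1 - α)⁻¹ * ∑ ω, p ω * max (L₂ ω - θ) 0) := by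
  have hc : 1 ≤ (1 - α)⁻¹ := (one_le_inv₀ (by linarith [hα.2])).2 (by linarith [hα.1])
  have hbdd : BddBelow (Set.range fun θ : ℝ =>
      θ + (1 - α)⁻¹ * ∑ ω, p ω * max ((L₁ ω + L₂ ω) - θ) 0) := by
    refine ⟨∑ ω, p ω * (L₁ ω + L₂ ω), ?_⟩
    rintro _ ⟨θ, rfl⟩
    have h0 : 0 ≤ ∑ ω, p ω * max ((L₁ ω + L₂ ω) - θ) 0 :=
      Finset.sum_nonneg fun ω _ => mul_nonneg (hp ω) (le_max_right _ _)
    have h1 : ∑ ω, p ω * ((L₁ ω + L₂ ω) - θ) ≤ ∑ ω, p ω * max ((L₁ ω + L₂ ω) - θ) 0 :=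
      Finset.sum_le_sum fun ω _ => mul_le_mul_of_nonneg_left (le_max_left _ _) (hp ω)
    have h2 : ∑ ω, p ω * ((L₁ ω + L₂ ω) - θ) = ∑ ω, p ω * (L₁ ω + L₂ ω) - θ := by
      simp only [mul_sub, Finset.sum_sub_distrib]
      rw [← Finset.sum_mul, hpsum, one_mul]
    have h3 := le_mul_of_one_le_left h0 hc
    show _ ≤ θ + _
    linarith
  rw [← sub_le_iff_le_add]
  refine le_csInf (Set.range_nonempty _) ?_
  rintro _ ⟨θ₁, rfl⟩
  rw [sub_le_comm]
  refine le_csInf (Set.range_nonempty _) ?_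
  rintro _ ⟨θ₂, rfl⟩
  rw [sub_le_iff_le_add]
  refine (csInf_le hbdd ⟨θ₁ + θ₂, rfl⟩).trans ?_
  have h : ∑ ω, p ω * max ((L₁ ω + L₂ ω) - (θ₁ + θ₂)) 0 ≤
      ∑ ω, p ω * max (L₁ ω - θ₁) 0 + ∑ ω, p ω * max (L₂ ω - θ₂) 0 := by
    rw [← Finset.sum_add_distrib]
    refine Finset.sum_le_sum fun ω _ => ?_
    rw [← mul_add]
    refine mul_le_mul_of_nonneg_left (max_le ?_ ?_) (hp ω)
    · linarith [le_max_left (L₁ ω - θ₁) 0, le_max_left (L₂ ω - θ₂) 0]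
    · exact add_nonneg (le_max_right _ _) (le_max_right _ _)
  have h' := mul_le_mul_of_nonneg_left h (zero_le_one.trans hc)
  rw [mul_add] at h'
  show θ₁ + θ₂ + _ ≤ θ₂ + _ + (θ₁ + _)
  linarith
end
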